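/- Let A be a commutative ℚ-algebra, α a type, and h : {finite subsets of α} → A with h(∅) = 0, with ∗-product (f ∗ h)(Y) := ∑_{Z ⊆ Y} f(Z) h(Y∖Z). Then for every nonempty finite Y ⊆ α, ∑_{n=1}^{|Y|} ((−1)^{n−1}/n) · h^{∗n}(Y) = ∑_{P partition of Y} (−1)^{|P|−1}(|P|−1)! ∏_{X ∈ P} h(X). -/

import Mathlib

/-- The `∗`-product `(f ∗ h)(Y) = ∑_{Z ⊆ Y} f(Z) h(Y∖Z)` on functions from finite subsets
of `α` to a commutative ring `A`. -/
def starConv {α : Type*} [DecidableEq α] {A : Type*} [CommRing A]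
    (f h : Finset α → A) (Y : Finset α) : A :=
  ∑ Z ∈ Y.powerset, f Z * h (Y \ Z)

/-- The `n`-fold `∗`-power `h^{∗n}`; the `0`-th power is the unit of the `∗`-product. -/
def starPow {α : Type*} [DecidableEq α] {A : Type*} [CommRing A]
    (f : Finset α → A) : ℕ → Finset α → A
  | 0 => fun Y => if Y = ∅ then 1 else 0
  | n + 1 => starConv f (starPow f n)

/-!
Expanding `h^{∗n}(Y)` gives a sum of products `h(Z₁) ⋯ h(Zₙ)` over the ordered decompositions of `Y`
into `n` disjoint subsets. As `h(∅) = 0`, only nonempty subsets contribute, so every partition of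
`Y` into `n` blocks is counted once per ordering of its blocks, that is `n!` times. The formula for
the logarithm follows from `n! / n = (n - 1)!`. The count is by induction on `n`: choosing a block
of a partition of `Y` is choosing a nonempty `Z ⊆ Y` and a partition of `Y \ Z`.
-/

section MarkedParts

theorem notMem_parts_of_disjoint {α : Type*} [Lattice α] [OrderBot α] {a b : α}
    (P : Finpartition a) (hb : b ≠ ⊥) (hab : Disjoint a b) : b ∉ P.parts :=
  fun hbP => hb (hab.symm.eq_bot_of_le (P.le hbP))

variable {α : Type*} [GeneralizedBooleanAlgebra α] [DecidableEq α]

theorem parts_avoid_of_mem {a b : α} (P : Finpartition a) (hb : b ∈ P.parts) :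
    (P.avoid b).parts = P.parts.erase b := by
  have disjoint_b {d : α} (hd : d ∈ P.parts) (hdb : d ≠ b) : Disjoint d b :=
    P.disjoint hd hb hdb
  ext c
  rw [Finpartition.mem_avoid, Finset.mem_erase]
  constructor
  · rintro ⟨d, hd, hdb, rfl⟩
    have hne : d ≠ b := fun h => hdb h.le
    rw [(disjoint_b hd hne).sdiff_eq_left]
    exact ⟨hne, hd⟩
  · rintro ⟨hcb, hc⟩
    exact ⟨c, hc, fun hle => P.ne_bot hc ((disjoint_b hc hcb).eq_bot_of_le hle),
      (disjoint_b hc hcb).sdiff_eq_left⟩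

/-- Partitions of `a` with a marked part `b` correspond to pairs of a nonzero `b ≤ a` and a
partition of `a \ b`, by deleting the marked part. This drives the recursion on the number of
parts. -/
def markedPartEquiv (a : α) :
    (Σ P : Finpartition a, {b // b ∈ P.parts}) ≃ Σ b : Set.Ioc ⊥ a, Finpartition (a \ b.1) where
  toFun x := ⟨⟨x.2, bot_lt_iff_ne_bot.2 (x.1.ne_bot x.2.2), x.1.le x.2.2⟩, x.1.avoid x.2⟩
  invFun y := ⟨y.2.extend y.1.2.1.ne' disjoint_sdiff_self_left (sdiff_sup_cancel y.1.2.2),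
    y.1, Finset.mem_insert_self _ _⟩
  left_inv := by
    rintro ⟨P, b, hb⟩
    refine Sigma.subtype_ext (Finpartition.ext ?_) rfl
    rw [Finpartition.extend_parts, parts_avoid_of_mem P hb, Finset.insert_erase hb]
  right_inv := by
    rintro ⟨⟨b, hb⟩, Q⟩
    refine Sigma.ext rfl (heq_of_eq (Finpartition.ext ?_))
    have hbQ : b ∉ Q.parts :=
      notMem_parts_of_disjoint Q (Set.mem_Ioc.1 hb).1.ne' disjoint_sdiff_self_left
    exact (parts_avoid_of_mem _ (Finset.mem_insert_self _ _)).trans (Finset.erase_insert hbQ)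

theorem sum_sum_parts_erase [LocallyFiniteOrder α] [∀ a : α, Fintype (Finpartition a)]
    {M : Type*} [AddCommMonoid M] (f : α → Finset α → M) (a : α) :
    ∑ P : Finpartition a, ∑ b ∈ P.parts, f b (P.parts.erase b) =
      ∑ b ∈ Finset.Ioc ⊥ a, ∑ Q : Finpartition (a \ b), f b Q.parts := by
  calc
    _ = ∑ x : Σ P : Finpartition a, {b // b ∈ P.parts}, f x.2 (x.1.parts.erase x.2) := by
      simp only [Fintype.sum_sigma, Finset.univ_eq_attach]
      exact Finset.sum_congr rfl fun P _ =>
        (Finset.sum_attach P.parts fun b => f b (P.parts.erase b)).symm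
    _ = ∑ y : Σ b : Set.Ioc ⊥ a, Finpartition (a \ b.1), f y.1 y.2.parts :=
      Fintype.sum_equiv (markedPartEquiv a) _ _ fun x =>
        congrArg (f x.2) (parts_avoid_of_mem x.1 x.2.2).symm
    _ = _ := by
      rw [Fintype.sum_sigma]
      exact (Finset.sum_subtype _ (fun b => Finset.mem_Ioc.trans Set.mem_Ioc.symm)
        fun b => ∑ Q : Finpartition (a \ b), f b Q.parts).symm

end MarkedParts

section PartitionSum

/-- The sum of `∏ h(X)` over the partitions of `a` into exactly `n` parts `X`; for finsets this is
the divided `∗`-power `h^{∗n} / n!` when `h(∅) = 0`. -/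
def partitionSum {α R : Type*} [Lattice α] [OrderBot α] [CommSemiring R] (h : α → R) (n : ℕ)
    (a : α) [Fintype (Finpartition a)] : R :=
  ∑ P : Finpartition a with P.parts.card = n, ∏ X ∈ P.parts, h X

theorem partitionSum_zero {α R : Type*} [Lattice α] [OrderBot α] [DecidableEq α]
    [CommSemiring R] (h : α → R) (a : α) [Fintype (Finpartition a)] :
    partitionSum h 0 a = if a = ⊥ then 1 else 0 := by
  simp only [partitionSum, Finset.card_eq_zero, Finpartition.parts_eq_empty_iff]
  split_ifs with ha
  · subst ha
    simp [Finpartition.default_eq_empty]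
  · simp [ha]

theorem succ_mul_partitionSum_succ {α R : Type*} [GeneralizedBooleanAlgebra α]
    [LocallyFiniteOrder α] [∀ a : α, Fintype (Finpartition a)] [CommSemiring R]
    (h : α → R) (n : ℕ) (a : α) :
    ((n + 1 : ℕ) : R) * partitionSum h (n + 1) a =
      ∑ b ∈ Finset.Ioc ⊥ a, h b * partitionSum h n (a \ b) := by
  classical
  let f (b : α) (s : Finset α) : R := if s.card = n then h b * ∏ X ∈ s, h X else 0
  have f_erase (P : Finpartition a) (b : α) (hb : b ∈ P.parts) :
      f b (P.parts.erase b) = if P.parts.card = n + 1 then ∏ X ∈ P.parts, h X else 0 := by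
    simp only [f, Finset.mul_prod_erase _ _ hb, ← Finset.card_erase_add_one hb,
      Nat.add_right_cancel_iff]
  calc
    _ = ∑ P : Finpartition a, ∑ b ∈ P.parts, f b (P.parts.erase b) := by
      rw [partitionSum, Finset.sum_filter, Finset.mul_sum]
      refine Finset.sum_congr rfl fun P _ => ?_
      rw [Finset.sum_congr rfl (f_erase P), Finset.sum_const, nsmul_eq_mul]
      split_ifs with hP
      · rw [hP]
      · simp only [mul_zero]
    _ = ∑ b ∈ Finset.Ioc ⊥ a, ∑ Q : Finpartition (a \ b), f b Q.parts :=
      sum_sum_parts_erase f a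
    _ = _ := by
      simp only [f, partitionSum, Finset.sum_filter, Finset.mul_sum, mul_ite, mul_zero]

end PartitionSum

theorem div_smul_factorial_mul {K R : Type*} [DivisionSemiring K] [CharZero K] [Semiring R]
    [Module K R] {n : ℕ} (hn : n ≠ 0) (c : K) (x : R) :
    (c / n) • ((n.factorial : R) * x) = c • (((n - 1).factorial : R) * x) := by
  rw [← Nat.mul_factorial_pred hn, Nat.cast_mul, mul_assoc, ← nsmul_eq_mul,
    ← Nat.cast_smul_eq_nsmul K, smul_smul, div_mul_cancel₀ c (Nat.cast_ne_zero.2 hn)]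

section StarPow

variable {α : Type*} [DecidableEq α] {A : Type*} [CommRing A]

theorem starConv_eq_sum_Ioc {f : Finset α → A} (hf : f ∅ = 0) (g : Finset α → A)
    (Y : Finset α) : starConv f g Y = ∑ Z ∈ Finset.Ioc ⊥ Y, f Z * g (Y \ Z) := by
  refine (Finset.sum_subset (fun Z hZ => ?_) fun Z hZ hZ' => ?_).symm
  · exact Finset.mem_powerset.2 (Finset.mem_Ioc.1 hZ).2
  · have hZ_empty : Z = ∅ := by
      by_contra hne
      exact hZ' (Finset.mem_Ioc.2 ⟨bot_lt_iff_ne_bot.2 hne, Finset.mem_powerset.1 hZ⟩)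
    rw [hZ_empty, hf, zero_mul]

theorem starPow_eq_factorial_mul_partitionSum {h : Finset α → A} (hh : h ∅ = 0) (n : ℕ)
    (Y : Finset α) : starPow h n Y = (n.factorial : A) * partitionSum h n Y := by
  induction n generalizing Y with
  | zero => rw [partitionSum_zero, Nat.factorial_zero, Nat.cast_one, one_mul]; rfl
  | succ n ih =>
    calc
      starPow h (n + 1) Y = ∑ Z ∈ Finset.Ioc ⊥ Y, h Z * starPow h n (Y \ Z) :=
        starConv_eq_sum_Ioc hh _ Y
      _ = (n.factorial : A) * ∑ Z ∈ Finset.Ioc ⊥ Y, h Z * partitionSum h n (Y \ Z) := by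
        simp only [ih, Finset.mul_sum, mul_left_comm]
      _ = ((n + 1).factorial : A) * partitionSum h (n + 1) Y := by
        rw [← succ_mul_partitionSum_succ, ← mul_assoc, ← Nat.cast_mul, mul_comm n.factorial,
          Nat.factorial_succ]

theorem sum_smul_starPow {K : Type*} [Semiring K] [Module K A] {h : Finset α → A} (hh : h ∅ = 0)
    (c : ℕ → K) {Y : Finset α} {t : Finset ℕ} (ht : ∀ P : Finpartition Y, P.parts.card ∈ t) :
    ∑ n ∈ t, c n • starPow h n Y =
      ∑ P : Finpartition Y,
        c P.parts.card • ((P.parts.card.factorial : A) * ∏ X ∈ P.parts, h X) := by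
  rw [← Finset.sum_fiberwise_of_maps_to fun P _ => ht P]
  refine Finset.sum_congr rfl fun n _ => ?_
  rw [starPow_eq_factorial_mul_partitionSum hh, partitionSum, Finset.mul_sum, Finset.smul_sum]
  refine Finset.sum_congr rfl fun P hP => ?_
  rw [(Finset.mem_filter.1 hP).2]

end StarPow

/-- **Second key step in the proof of Lemma 1 of the paper.** For a commutative
`ℚ`-algebra `A` and `h` with `h(∅) = 0`, the `∗`-logarithm of `1 + h` is the signed sum
over partitions: for every nonempty finite `Y ⊆ α`,
`∑_{n=1}^{|Y|} ((−1)^{n−1}/n) h^{∗n}(Y) = ∑_{P partition of Y} (−1)^{|P|−1}(|P|−1)! ∏_{X ∈ P} h(X)`. -/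
theorem starLog_eq_sum_partitions {α : Type*} [DecidableEq α]
    {A : Type*} [CommRing A] [Algebra ℚ A] (h : Finset α → A) (hh : h ∅ = 0)
    (Y : Finset α) (hY : Y.Nonempty) :
    ∑ n ∈ Finset.Icc 1 Y.card, ((-1 : ℚ) ^ (n - 1) / n) • starPow h n Y =
      ∑ P : Finpartition Y,
        (-1 : A) ^ (P.parts.card - 1) * (Nat.factorial (P.parts.card - 1) : A) *
          ∏ X ∈ P.parts, h X := by
  have card_parts_ne_zero (P : Finpartition Y) : P.parts.card ≠ 0 :=
    (Finset.card_pos.2 (P.parts_nonempty hY.ne_empty)).ne'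
  have card_parts_mem (P : Finpartition Y) : P.parts.card ∈ Finset.Icc 1 Y.card :=
    Finset.mem_Icc.2 ⟨Nat.one_le_iff_ne_zero.2 (card_parts_ne_zero P), P.card_parts_le_card⟩
  rw [sum_smul_starPow hh (fun n => (-1 : ℚ) ^ (n - 1) / n) card_parts_mem]
  refine Finset.sum_congr rfl fun P _ => ?_
  rw [div_smul_factorial_mul (card_parts_ne_zero P), Algebra.smul_def, map_pow, map_neg, map_one,
    mul_assoc]
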